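/- Let C be a finite nonempty set, let p : C → ℝ be a probability mass function, and define N_eff = (Σ_{c∈C} p(c)²)⁻¹. Let (Ω, 𝔽, P) be a probability space, let E be a finite-dimensional real inner product space, fix θ ∈ E, η > 0, and let û : Ω → E be a measurable random vector with ‖û(ω)‖ = 1 for all ω; set θ⁺(ω) = θ − η·û(ω). For each c ∈ C let F_c : E → ℝ be differentiable with L-Lipschitz gradient and with ‖∇F_c(θ)‖ ≤ G, where L, G ≥ 0, and write Δ_c(ω) = F_c(θ⁺(ω)) − F_c(θ). Let S ⊆ C with |S| ≤ m for some real m > 0, let κ > 0 and ρ ∈ (0,1], and assume: (i) for every c ∈ C \ S, P(Δ_c ≥ κ) ≥ ρ; (ii) for every c ∈ S, E[Δ_c] ≥ 0; (iii) ρ·κ − (1 − ρ)·(η·G + L·η²/2) ≥ 0; and (iv) each Δ_c is measurable. Then, with a := √(m / N_eff), the mixture loss F_r(θ') := Σ_{c∈C} p(c)·F_c(θ') satisfies E[F_r(θ⁺) − F_r(θ)] ≥ max(0, 1 − a) · (ρ·κ − (1 − ρ)·(η·G + L·η²/2)). -/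

import Mathlib

open Finset Real MeasureTheory

/-- If the gradient of `f` is `L`-Lipschitz around `x`, the increment of `f` is bounded by its
first-order term plus a quadratic remainder. -/
theorem abs_sub_le_of_gradient_lipschitz {E : Type*} [NormedAddCommGroup E]
    [InnerProductSpace ℝ E] [CompleteSpace E] {f : E → ℝ} (hf : Differentiable ℝ f) {x : E} {L : ℝ}
    (hlip : ∀ y, ‖gradient f y - gradient f x‖ ≤ L * ‖y - x‖) (v : E) :
    |f (x + v) - f x| ≤ ‖gradient f x‖ * ‖v‖ + L * ‖v‖ ^ 2 / 2 := by
  have hderiv (t : ℝ) : HasDerivAt (fun s : ℝ => f (x + s • v) - f x)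
      (inner ℝ (gradient f (x + t • v)) v) t := by
    have hline : HasDerivAt (fun s : ℝ => x + s • v) v t := by
      simpa using ((hasDerivAt_id t).smul_const v).const_add x
    have hgrad := (hf (x + t • v)).hasGradientAt.hasFDerivAt.comp_hasDerivAt t hline
    simpa using hgrad.sub_const (f x)
  have hbound (t : ℝ) : HasDerivAt
      (fun s : ℝ => ‖gradient f x‖ * ‖v‖ * s + L * ‖v‖ ^ 2 / 2 * s ^ 2)
      (‖gradient f x‖ * ‖v‖ + L * ‖v‖ ^ 2 * t) t := by
    refine (((hasDerivAt_id t).const_mul (‖gradient f x‖ * ‖v‖)).add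
      ((hasDerivAt_pow 2 t).const_mul (L * ‖v‖ ^ 2 / 2))).congr_deriv ?_
    push_cast
    ring
  have h := image_norm_le_of_norm_deriv_right_le_deriv_boundary (a := 0) (b := 1)
    (fun t _ => (hderiv t).continuousAt.continuousWithinAt)
    (fun t _ => (hderiv t).hasDerivWithinAt) (by simp) hbound
    (fun t ht => by
      have hnorm : ‖gradient f (x + t • v)‖ ≤ ‖gradient f x‖ + L * (t * ‖v‖) := by
        have hl := hlip (x + t • v)
        rw [add_sub_cancel_left, norm_smul, Real.norm_of_nonneg ht.1] at hl
        linarith [norm_le_norm_add_norm_sub' (gradient f (x + t • v)) (gradient f x)]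
      calc ‖(inner ℝ (gradient f (x + t • v)) v : ℝ)‖
          ≤ ‖gradient f (x + t • v)‖ * ‖v‖ := norm_inner_le_norm _ _
        _ ≤ (‖gradient f x‖ + L * (t * ‖v‖)) * ‖v‖ := by gcongr
        _ = ‖gradient f x‖ * ‖v‖ + L * ‖v‖ ^ 2 * t := by ring)
    (Set.right_mem_Icc.2 zero_le_one)
  simpa using h

/-- A random variable bounded below by `-M` that exceeds `κ` with probability at least `ρ` has
mean at least `ρ * κ - (1 - ρ) * M`. -/
theorem le_integral_of_le_measure_tail {Ω : Type*} [MeasurableSpace Ω] {P : Measure Ω}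
    [IsProbabilityMeasure P] {X : Ω → ℝ} (hX : Measurable X) (hint : Integrable X P)
    {M κ ρ : ℝ} (hM : ∀ ω, -M ≤ X ω) (hκM : 0 ≤ κ + M)
    (htail : ENNReal.ofReal ρ ≤ P {ω | κ ≤ X ω}) :
    ρ * κ - (1 - ρ) * M ≤ ∫ ω, X ω ∂P := by
  have hs : MeasurableSet {ω | κ ≤ X ω} := measurableSet_le measurable_const hX
  have hρ : ρ ≤ P.real {ω | κ ≤ X ω} :=
    (ENNReal.ofReal_le_iff_le_toReal (measure_ne_top _ _)).1 htail
  have hind : Integrable ({ω | κ ≤ X ω}.indicator fun _ => κ + M) P :=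
    (integrable_const _).indicator hs
  calc ρ * κ - (1 - ρ) * M = -M + ρ * (κ + M) := by ring
    _ ≤ -M + P.real {ω | κ ≤ X ω} * (κ + M) := by gcongr
    _ = ∫ ω, (-M + {ω | κ ≤ X ω}.indicator (fun _ => κ + M) ω) ∂P := by
      rw [integral_add (integrable_const _) hind, integral_indicator_const _ hs]
      simp
    _ ≤ ∫ ω, X ω ∂P := by
      refine integral_mono ((integrable_const _).add hind) hint fun ω => ?_
      by_cases hω : κ ≤ X ω
      · simp [hω]
      · simpa [hω] using hM ω

/-- The mass of a set of at most `m` points is at most `√(m * ∑ c, p c ^ 2)`. -/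
theorem sum_le_sqrt_mul_sum_sq {C : Type*} [Fintype C] (p : C → ℝ) (S : Finset C) {m : ℝ}
    (hS : (S.card : ℝ) ≤ m) : ∑ c ∈ S, p c ≤ √(m * ∑ c, p c ^ 2) := by
  refine Real.le_sqrt_of_sq_le (sq_sum_le_card_mul_sum_sq.trans ?_)
  have hsub : ∑ c ∈ S, p c ^ 2 ≤ ∑ c, p c ^ 2 :=
    sum_le_sum_of_subset_of_nonneg (subset_univ S) fun c _ _ => sq_nonneg (p c)
  have hm : 0 ≤ m := (Nat.cast_nonneg _).trans hS
  gcongr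

/-- **Theorem 1 (composition mixing increases forgetting susceptibility).**
Let `p` be a probability mass function on a finite nonempty set `C` with effective
composition number `N_eff = (∑ c, p c ^ 2)⁻¹`.  Let `û` be a measurable random unit
vector on a probability space, `θ⁺ = θ − η • û`, and for each composition `c` let
`F_c` be differentiable with `L`-Lipschitz gradient and `‖∇F_c(θ)‖ ≤ G`; write
`Δ_c = F_c(θ⁺) − F_c(θ)`.  If `S ⊆ C` with `|S| ≤ m`, each off-`S` composition
satisfies the tail bound `P(Δ_c ≥ κ) ≥ ρ`, each `c ∈ S` satisfies `E[Δ_c] ≥ 0`,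
and `ρκ − (1−ρ)(ηG + Lη²/2) ≥ 0`, then with `a = √(m / N_eff)` the mixture loss
`F_r(θ') = ∑ c, p c • F_c(θ')` satisfies
`E[F_r(θ⁺) − F_r(θ)] ≥ (1 − a)₊ (ρκ − (1−ρ)(ηG + Lη²/2))`. -/
theorem composition_mixing_increases_forgetting
    {C : Type*} [Fintype C] [DecidableEq C] [Nonempty C]
    (p : C → ℝ) (hp : ∀ c, 0 ≤ p c) (hsum : ∑ c, p c = 1)
    (Neff : ℝ) (hNeff : Neff = (∑ c, p c ^ 2)⁻¹)
    {Ω : Type*} [MeasurableSpace Ω] (P : Measure Ω) [IsProbabilityMeasure P]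
    {E : Type*} [NormedAddCommGroup E] [InnerProductSpace ℝ E]
    [FiniteDimensional ℝ E] [MeasurableSpace E] [BorelSpace E]
    (θ : E) (η : ℝ) (hη : 0 < η)
    (u : Ω → E) (hu_meas : Measurable u) (hu_norm : ∀ ω, ‖u ω‖ = 1)
    (F : C → E → ℝ) (L G : ℝ) (hL : 0 ≤ L) (hG : 0 ≤ G)
    (hF_diff : ∀ c, Differentiable ℝ (F c))
    (hF_lip : ∀ c, ∀ θ₁ θ₂ : E, ‖gradient (F c) θ₁ - gradient (F c) θ₂‖ ≤ L * ‖θ₁ - θ₂‖)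
    (hF_grad : ∀ c, ‖gradient (F c) θ‖ ≤ G)
    (Δ : C → Ω → ℝ) (hΔ : ∀ c ω, Δ c ω = F c (θ - η • u ω) - F c θ)
    (S : Finset C) (m : ℝ) (hm : 0 < m) (hS : (S.card : ℝ) ≤ m)
    (κ ρ : ℝ) (hκ : 0 < κ) (hρ0 : 0 < ρ) (hρ1 : ρ ≤ 1)
    (htail : ∀ c ∈ Sᶜ, ENNReal.ofReal ρ ≤ P {ω | κ ≤ Δ c ω})
    (hprotected : ∀ c ∈ S, 0 ≤ ∫ ω, Δ c ω ∂P)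
    (hsign : 0 ≤ ρ * κ - (1 - ρ) * (η * G + L * η ^ 2 / 2))
    (hΔ_meas : ∀ c, Measurable (Δ c))
    (a : ℝ) (ha : a = Real.sqrt (m / Neff)) :
    max 0 (1 - a) * (ρ * κ - (1 - ρ) * (η * G + L * η ^ 2 / 2)) ≤
      ∫ ω, ((∑ c, p c * F c (θ - η • u ω)) - ∑ c, p c * F c θ) ∂P := by
  set B := η * G + L * η ^ 2 / 2
  have hB : 0 ≤ B := by positivity
  have hΔB (c : C) (ω : Ω) : |Δ c ω| ≤ B := by
    have h := abs_sub_le_of_gradient_lipschitz (hF_diff c) (fun y => hF_lip c y θ) (-(η • u ω))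
    rw [← sub_eq_add_neg, ← hΔ, norm_neg, norm_smul, hu_norm, mul_one,
      Real.norm_of_nonneg hη.le] at h
    have hg := mul_le_mul_of_nonneg_right (hF_grad c) hη.le
    simp only [B]
    linarith
  have hint (c : C) : Integrable (Δ c) P :=
    Integrable.of_bound (hΔ_meas c).aestronglyMeasurable B (.of_forall (hΔB c))
  have hoff (c : C) (hc : c ∈ Sᶜ) : ρ * κ - (1 - ρ) * B ≤ ∫ ω, Δ c ω ∂P :=
    le_integral_of_le_measure_tail (hΔ_meas c) (hint c) (fun ω => (abs_le.1 (hΔB c ω)).1)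
      (by positivity) (htail c hc)
  have hmass : max 0 (1 - a) ≤ ∑ c ∈ Sᶜ, p c := by
    refine max_le (sum_nonneg fun c _ => hp c) ?_
    have hle := sum_le_sqrt_mul_sum_sq p S hS
    rw [← div_inv_eq_mul, ← hNeff, ← ha] at hle
    linarith [sum_add_sum_compl S p]
  have hmix : ∫ ω, ((∑ c, p c * F c (θ - η • u ω)) - ∑ c, p c * F c θ) ∂P
      = ∑ c, p c * ∫ ω, Δ c ω ∂P := by
    simp_rw [← integral_const_mul]
    rw [← integral_finsetSum _ fun c _ => (hint c).const_mul (p c)]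
    simp_rw [hΔ, mul_sub, sum_sub_distrib]
  rw [hmix, ← sum_add_sum_compl S]
  calc max 0 (1 - a) * (ρ * κ - (1 - ρ) * B)
      ≤ (∑ c ∈ Sᶜ, p c) * (ρ * κ - (1 - ρ) * B) := by gcongr
    _ = ∑ c ∈ Sᶜ, p c * (ρ * κ - (1 - ρ) * B) := sum_mul _ _ _
    _ ≤ ∑ c ∈ Sᶜ, p c * ∫ ω, Δ c ω ∂P :=
      sum_le_sum fun c hc => mul_le_mul_of_nonneg_left (hoff c hc) (hp c)
    _ ≤ _ := le_add_of_nonneg_left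
      (sum_nonneg fun c hc => mul_nonneg (hp c) (hprotected c hc))
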